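/- Under the same hypotheses as the finite-interval backward estimate, but with y defined on [t,∞), satisfying the same linear backward equation for almost every s ≥ t, and additionally assuming 2κ − 2K − 3ε > 0, lim_{T→∞} e^{KT} y(T) = 0, and that ∫_t^∞ e^{2Ks}( ‖C(s)‖² |z(s)|² + ‖M(s,·)‖_ρ² ‖k(s,·)‖_ρ² + |f(s)|² ) ds < ∞, one has y ∈ L^{2,K}(t,∞;ℝ^n) and e^{2Kt}|y(t)|² + (2κ − 2K − 3ε) ∫_t^∞ e^{2Ks}|y(s)|² ds ≤ (1/ε) ∫_t^∞ e^{2Ks} ( ‖C(s)‖² |z(s)|² + ‖M(s,·)‖_ρ² ‖k(s,·)‖_ρ² + |f(s)|² ) ds. -/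

import Mathlib

open MeasureTheory Matrix

/-- Euclidean operator norm of a real matrix. -/
noncomputable def opNorm {p q : ℕ} (C : Matrix (Fin p) (Fin q) ℝ) : ℝ :=
  sSup ((fun v => Real.sqrt ((C *ᵥ v) ⬝ᵥ (C *ᵥ v))) ''
    {v : Fin q → ℝ | Real.sqrt (v ⬝ᵥ v) ≤ 1})

/-!
Along the backward equation the weighted energy `e^{2Ks}‖y‖²` is absolutely continuous with
derivative `e^{2Ks}(2K‖y‖² + 2⟪y, y'⟫)`. Dissipativity of `A`, together with Young's inequality of
weight `ε` for each of the three forcing terms, bounds this derivative from below by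
`e^{2Ks}((2κ - 2K - 3ε)‖y‖² - ε⁻¹(‖C‖²‖z‖² + ‖M‖²‖k‖² + ‖f‖²))`. Integrating over `[t, T]` and
letting `T → ∞` removes the energy at `T`; nonnegativity of the energy turns the resulting uniform
bound into integrability on `[t, ∞)`.
-/

section AbsoluteContinuity

open Set AbsolutelyContinuousOnInterval

theorem absolutelyContinuousOnInterval_of_dist_le {X Y : Type*} [PseudoMetricSpace X]
    [PseudoMetricSpace Y] {f : ℝ → X} {g : ℝ → Y} {a b : ℝ}
    (hg : AbsolutelyContinuousOnInterval g a b)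
    (hfg : ∀ x ∈ uIcc a b, ∀ y ∈ uIcc a b, dist (f x) (f y) ≤ dist (g x) (g y)) :
    AbsolutelyContinuousOnInterval f a b := by
  rw [absolutelyContinuousOnInterval_iff] at hg ⊢
  intro ε hε
  obtain ⟨δ, hδ, hgδ⟩ := hg ε hε
  refine ⟨δ, hδ, fun I hI hlength => lt_of_le_of_lt ?_ (hgδ I hI hlength)⟩
  exact Finset.sum_le_sum fun i hi => hfg _ (hI.1 i hi).1 _ (hI.1 i hi).2

theorem absolutelyContinuousOnInterval_norm {F : Type*} [SeminormedAddCommGroup F] {f : ℝ → F}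
    {a b : ℝ} (hf : AbsolutelyContinuousOnInterval f a b) :
    AbsolutelyContinuousOnInterval (fun s => ‖f s‖) a b :=
  absolutelyContinuousOnInterval_of_dist_le hf fun x _ y _ =>
    (dist_norm_norm_le (f x) (f y)).trans_eq (dist_eq_norm _ _).symm

theorem integral_le_sub_of_le_deriv {φ h : ℝ → ℝ} {a b : ℝ} (hab : a ≤ b)
    (hφ : AbsolutelyContinuousOnInterval φ a b) (hh : IntervalIntegrable h volume a b)
    (hle : ∀ᵐ s, s ∈ Ioo a b → h s ≤ deriv φ s) : ∫ s in a..b, h s ≤ φ b - φ a := by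
  rw [← hφ.integral_deriv_eq_sub]
  refine intervalIntegral.integral_mono_ae_restrict hab hh hφ.intervalIntegrable_deriv ?_
  rw [Filter.EventuallyLE, ← restrict_Ioo_eq_restrict_Icc]
  exact (ae_restrict_iff' measurableSet_Ioo).2 hle

section Primitive

variable {F : Type*} [NormedAddCommGroup F] [NormedSpace ℝ F] {y G : ℝ → F} {a b : ℝ}

-- A vector-valued primitive of `G` oscillates no more than the real primitive of `‖G‖`.
theorem absolutelyContinuousOnInterval_of_eq_add_integral
    (hG : IntervalIntegrable G volume a b)
    (hy : ∀ s ∈ uIcc a b, y s = y a + ∫ r in a..s, G r) :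
    AbsolutelyContinuousOnInterval y a b := by
  have hGsub : ∀ s ∈ uIcc a b, IntervalIntegrable G volume a s := fun s hs =>
    hG.mono_set (uIcc_subset_uIcc_left hs)
  refine absolutelyContinuousOnInterval_of_dist_le
    (hG.norm.absolutelyContinuousOnInterval_intervalIntegral left_mem_uIcc)
    fun s hs r hr => ?_
  rw [hy s hs, hy r hr, dist_add_left, dist_eq_norm, Real.dist_eq,
    intervalIntegral.integral_interval_sub_left (hGsub s hs) (hGsub r hr),
    intervalIntegral.integral_interval_sub_left (hGsub s hs).norm (hGsub r hr).norm]
  exact intervalIntegral.norm_integral_le_abs_integral_norm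

theorem ae_hasDerivAt_of_eq_add_integral [CompleteSpace F]
    (hG : IntervalIntegrable G volume a b)
    (hy : ∀ s ∈ uIcc a b, y s = y a + ∫ r in a..s, G r) :
    ∀ᵐ s, s ∈ Ioo a b → HasDerivAt y (G s) s := by
  have hIoo : Ioo a b ⊆ uIcc a b := Ioo_subset_Icc_self.trans Icc_subset_uIcc
  filter_upwards [hG.ae_hasDerivAt_integral] with s hs hsab
  refine ((hs (hIoo hsab) a left_mem_uIcc).const_add (y a)).congr_of_eventuallyEq ?_
  filter_upwards [isOpen_Ioo.mem_nhds hsab] with r hr using hy r (hIoo hr)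

end Primitive

end AbsoluteContinuity

section HalfLine

open Set Filter Topology

theorem integrableOn_Ioi_and_mul_integral_le_of_tendsto {φ u : ℝ → ℝ} {t c L : ℝ} (hc : 0 < c)
    (hφ : ∀ s, 0 ≤ φ s) (hφi : ∀ T, t ≤ T → IntervalIntegrable φ volume t T)
    (hle : ∀ T, t ≤ T → c * ∫ s in t..T, φ s ≤ u T) (hu : Tendsto u atTop (𝓝 L)) :
    IntegrableOn φ (Ioi t) ∧ c * ∫ s in Ioi t, φ s ≤ L := by
  have hφint : IntegrableOn φ (Ioi t) := by
    refine integrableOn_Ioi_of_intervalIntegral_norm_bounded ((L + 1) / c) t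
      (b := fun T => max t T) (fun T => (hφi _ (le_max_left t T)).1)
      (tendsto_atTop_mono (le_max_right t) tendsto_id) ?_
    filter_upwards [hu.eventually_le_const (lt_add_one L), eventually_ge_atTop t] with T hT htT
    simp only [max_eq_right htT, Real.norm_of_nonneg (hφ _)]
    rw [le_div_iff₀' hc]
    exact (hle T htT).trans hT
  refine ⟨hφint, le_of_tendsto_of_tendsto
    ((intervalIntegral_tendsto_integral_Ioi t hφint tendsto_id).const_mul c) hu ?_⟩
  filter_upwards [eventually_ge_atTop t] with T hT using hle T hT

end HalfLine

section WeightedEnergy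

open Set Filter Topology RealInnerProductSpace

section Normed

variable {F : Type*} [SeminormedAddCommGroup F]

/-- The energy `‖y s‖²` of a path carried with the exponential weight `e^{2Ks}`; its integral is
the squared norm of `y` in `L^{2,K}`. -/
noncomputable def weightedEnergy (K : ℝ) (y : ℝ → F) (s : ℝ) : ℝ :=
  Real.exp (2 * K * s) * ‖y s‖ ^ 2

theorem weightedEnergy_nonneg (K : ℝ) (y : ℝ → F) (s : ℝ) : 0 ≤ weightedEnergy K y s :=
  mul_nonneg (Real.exp_nonneg _) (sq_nonneg _)

theorem tendsto_weightedEnergy_zero [NormedSpace ℝ F] {K : ℝ} {y : ℝ → F} {l : Filter ℝ}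
    (hy : Tendsto (fun s => Real.exp (K * s) • y s) l (𝓝 0)) :
    Tendsto (weightedEnergy K y) l (𝓝 0) := by
  have hsq : weightedEnergy K y = fun s => ‖Real.exp (K * s) • y s‖ ^ 2 := by
    ext s
    rw [weightedEnergy, norm_smul, Real.norm_of_nonneg (Real.exp_nonneg _), mul_pow,
      ← Real.exp_nat_mul, Nat.cast_ofNat, mul_assoc]
  simpa [hsq] using hy.norm.pow 2

theorem absolutelyContinuousOnInterval_weightedEnergy {K : ℝ} {y : ℝ → F} {a b : ℝ}
    (hy : AbsolutelyContinuousOnInterval y a b) :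
    AbsolutelyContinuousOnInterval (weightedEnergy K y) a b := by
  have hexp : AbsolutelyContinuousOnInterval (fun s => Real.exp (2 * K * s)) a b :=
    ContDiffOn.absolutelyContinuousOnInterval (ContDiff.contDiffOn (by fun_prop))
  have hnorm := absolutelyContinuousOnInterval_norm hy
  have hsq : weightedEnergy K y = fun s => Real.exp (2 * K * s) * (‖y s‖ * ‖y s‖) := by
    ext s
    rw [weightedEnergy, sq]
  exact hsq ▸ hexp.fun_mul (hnorm.fun_mul hnorm)

end Normed

variable {H : Type*} [NormedAddCommGroup H] [InnerProductSpace ℝ H] {K : ℝ} {y G : ℝ → H}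

theorem hasDerivAt_weightedEnergy {y' : H} {s : ℝ} (hy : HasDerivAt y y' s) :
    HasDerivAt (weightedEnergy K y)
      (Real.exp (2 * K * s) * (2 * K * ‖y s‖ ^ 2 + 2 * ⟪y s, y'⟫)) s := by
  have hexp : HasDerivAt (fun r => Real.exp (2 * K * r)) (Real.exp (2 * K * s) * (2 * K)) s := by
    simpa using ((hasDerivAt_id s).const_mul (2 * K)).exp
  exact (hexp.fun_mul hy.norm_sq).congr_deriv (by ring)

theorem intervalIntegrable_weightedEnergy_of_eq_add_integral {a b : ℝ}
    (hG : IntervalIntegrable G volume a b)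
    (hy : ∀ s ∈ uIcc a b, y s = y a + ∫ r in a..s, G r) :
    IntervalIntegrable (weightedEnergy K y) volume a b :=
  (absolutelyContinuousOnInterval_weightedEnergy
    (absolutelyContinuousOnInterval_of_eq_add_integral hG hy)).continuousOn.intervalIntegrable

theorem integral_le_weightedEnergy_sub [CompleteSpace H] {h : ℝ → ℝ} {a b : ℝ} (hab : a ≤ b)
    (hG : IntervalIntegrable G volume a b)
    (hy : ∀ s ∈ uIcc a b, y s = y a + ∫ r in a..s, G r)
    (hh : IntervalIntegrable h volume a b)
    (hle : ∀ᵐ s, s ∈ Ioo a b →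
      h s ≤ Real.exp (2 * K * s) * (2 * K * ‖y s‖ ^ 2 + 2 * ⟪y s, G s⟫)) :
    ∫ s in a..b, h s ≤ weightedEnergy K y b - weightedEnergy K y a := by
  refine integral_le_sub_of_le_deriv hab (absolutelyContinuousOnInterval_weightedEnergy
    (absolutelyContinuousOnInterval_of_eq_add_integral hG hy)) hh ?_
  filter_upwards [ae_hasDerivAt_of_eq_add_integral hG hy, hle] with s hderiv hs hsab
  exact (hs hsab).trans_eq (hasDerivAt_weightedEnergy (hderiv hsab)).deriv.symm

theorem weightedEnergy_add_mul_integral_le [CompleteSpace H] {q : ℝ → ℝ} {c a b : ℝ}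
    (hab : a ≤ b) (hG : IntervalIntegrable G volume a b)
    (hy : ∀ s ∈ uIcc a b, y s = y a + ∫ r in a..s, G r)
    (hq : IntervalIntegrable (fun s => Real.exp (2 * K * s) * q s) volume a b)
    (hle : ∀ᵐ s, s ∈ Ioo a b →
      c * ‖y s‖ ^ 2 - q s ≤ 2 * K * ‖y s‖ ^ 2 + 2 * ⟪y s, G s⟫) :
    weightedEnergy K y a + c * ∫ s in a..b, weightedEnergy K y s
      ≤ weightedEnergy K y b + ∫ s in a..b, Real.exp (2 * K * s) * q s := by
  have henergy : IntervalIntegrable (weightedEnergy K y) volume a b :=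
    intervalIntegrable_weightedEnergy_of_eq_add_integral hG hy
  have hsub := integral_le_weightedEnergy_sub (K := K) hab hG hy
    ((henergy.const_mul c).sub hq) (by
      filter_upwards [hle] with s hs hsab
      calc c * weightedEnergy K y s - Real.exp (2 * K * s) * q s
          = Real.exp (2 * K * s) * (c * ‖y s‖ ^ 2 - q s) := by rw [weightedEnergy]; ring
        _ ≤ _ := mul_le_mul_of_nonneg_left (hs hsab) (Real.exp_nonneg _))
  rw [intervalIntegral.integral_sub (henergy.const_mul c) hq,
    intervalIntegral.integral_const_mul] at hsub
  linarith

theorem integrableOn_weightedEnergy_and_add_mul_integral_le [CompleteSpace H] {q : ℝ → ℝ}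
    {c t : ℝ} (hc : 0 < c) (hG : ∀ T, t ≤ T → IntervalIntegrable G volume t T)
    (hy : ∀ s, t ≤ s → y s = y t + ∫ r in t..s, G r)
    (hylim : Tendsto (fun T => Real.exp (K * T) • y T) atTop (𝓝 0))
    (hq : IntegrableOn (fun s => Real.exp (2 * K * s) * q s) (Ici t))
    (hle : ∀ᵐ s ∂volume.restrict (Ici t),
      c * ‖y s‖ ^ 2 - q s ≤ 2 * K * ‖y s‖ ^ 2 + 2 * ⟪y s, G s⟫) :
    IntegrableOn (weightedEnergy K y) (Ici t) ∧
      weightedEnergy K y t + c * ∫ s in Ici t, weightedEnergy K y s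
        ≤ ∫ s in Ici t, Real.exp (2 * K * s) * q s := by
  have hyT : ∀ T, t ≤ T → ∀ s ∈ uIcc t T, y s = y t + ∫ r in t..s, G r := fun T hT s hs =>
    hy s (by rw [uIcc_of_le hT] at hs; exact hs.1)
  have hfinite : ∀ T, t ≤ T → c * ∫ s in t..T, weightedEnergy K y s
      ≤ weightedEnergy K y T + (∫ s in t..T, Real.exp (2 * K * s) * q s)
        - weightedEnergy K y t := by
    intro T hT
    have := weightedEnergy_add_mul_integral_le hT (hG T hT) (hyT T hT)
      (intervalIntegrable_iff_integrableOn_Icc_of_le hT |>.2 (hq.mono_set Icc_subset_Ici_self))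
      (((ae_restrict_iff' measurableSet_Ici).1 hle).mono fun s hs hst => hs hst.1.le)
    linarith
  have hlimit := ((tendsto_weightedEnergy_zero hylim).add (intervalIntegral_tendsto_integral_Ioi t
    (hq.mono_set Ioi_subset_Ici_self) tendsto_id)).sub_const (weightedEnergy K y t)
  obtain ⟨hintegrable, hbound⟩ := integrableOn_Ioi_and_mul_integral_le_of_tendsto hc
    (weightedEnergy_nonneg K y)
    (fun T hT => intervalIntegrable_weightedEnergy_of_eq_add_integral (hG T hT) (hyT T hT))
    hfinite hlimit
  rw [integral_Ici_eq_integral_Ioi, integral_Ici_eq_integral_Ioi]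
  exact ⟨(integrableOn_Ici_iff_integrableOn_Ioi (by simp)).2 hintegrable, by linarith⟩

end WeightedEnergy

section InnerProduct

open RealInnerProductSpace

variable {H : Type*} [SeminormedAddCommGroup H] [InnerProductSpace ℝ H]

theorem two_mul_inner_le_mul_norm_sq_add {ε : ℝ} (hε : 0 < ε) (v w : H) :
    2 * ⟪v, w⟫ ≤ ε * ‖v‖ ^ 2 + (1 / ε) * ‖w‖ ^ 2 := by
  have hsq : 0 ≤ (1 / ε) * (ε * ‖v‖ - ‖w‖) ^ 2 := by positivity
  have hexpand : (1 / ε) * (ε * ‖v‖ - ‖w‖) ^ 2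
      = ε * ‖v‖ ^ 2 + (1 / ε) * ‖w‖ ^ 2 - 2 * (‖v‖ * ‖w‖) := by
    field_simp
    ring
  linarith [real_inner_le_norm v w]

theorem mul_norm_sq_sub_le_two_mul_inner_of_dissipative {K ε κ : ℝ} (hε : 0 < ε)
    {v a : H} (hdiss : 2 * ⟪v, a⟫ ≤ -2 * κ * ‖v‖ ^ 2) (c g f : H) :
    (2 * κ - 2 * K - 3 * ε) * ‖v‖ ^ 2 - (1 / ε) * (‖c‖ ^ 2 + ‖g‖ ^ 2 + ‖f‖ ^ 2)
      ≤ 2 * K * ‖v‖ ^ 2 + 2 * ⟪v, -((2 * K) • v + a) - c - g - f⟫ := by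
  simp only [inner_sub_right, inner_neg_right, inner_add_right, inner_smul_right,
    real_inner_self_eq_norm_sq]
  linarith [two_mul_inner_le_mul_norm_sq_add hε v c, two_mul_inner_le_mul_norm_sq_add hε v g,
    two_mul_inner_le_mul_norm_sq_add hε v f]

end InnerProduct

section CauchySchwarz

variable {α F V W : Type*} [MeasurableSpace α] [NormedAddCommGroup F] [NormedSpace ℝ F]
  [NormedAddCommGroup V] [NormedAddCommGroup W]

theorem sq_norm_integral_le_of_norm_le_mul {μ : Measure α} {B : α → F} {a : α → V} {b : α → W}
    (ha : MemLp a 2 μ) (hb : MemLp b 2 μ) (hB : ∀ x, ‖B x‖ ≤ ‖a x‖ * ‖b x‖) :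
    ‖∫ x, B x ∂μ‖ ^ 2 ≤ (∫ x, ‖a x‖ ^ 2 ∂μ) * ∫ x, ‖b x‖ ^ 2 ∂μ := by
  have ha0 : 0 ≤ ∫ x, ‖a x‖ ^ 2 ∂μ := integral_nonneg fun x => sq_nonneg _
  have hholder := integral_mul_norm_le_Lp_mul_Lq (μ := μ) Real.HolderConjugate.two_two
    (f := fun x => ‖a x‖) (g := fun x => ‖b x‖) (by simpa using ha.norm) (by simpa using hb.norm)
  simp only [norm_norm, Real.rpow_two, ← Real.sqrt_eq_rpow] at hholder
  rw [← Real.sqrt_le_sqrt_iff (by positivity), Real.sqrt_sq (norm_nonneg _), Real.sqrt_mul ha0]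
  calc ‖∫ x, B x ∂μ‖ ≤ ∫ x, ‖B x‖ ∂μ := norm_integral_le_integral_norm B
    _ ≤ ∫ x, ‖a x‖ * ‖b x‖ ∂μ := integral_mono_of_nonneg (ae_of_all _ fun x => norm_nonneg _)
        (ha.norm.integrable_mul hb.norm) (ae_of_all _ hB)
    _ ≤ _ := hholder

theorem sq_norm_sum_integral_le_of_norm_le_mul {ι : Type*} [Fintype ι] {μ : ι → Measure α}
    {B : ι → α → F} {a : ι → α → V} {b : ι → α → W} (ha : ∀ j, MemLp (a j) 2 (μ j))
    (hb : ∀ j, MemLp (b j) 2 (μ j)) (hB : ∀ j x, ‖B j x‖ ≤ ‖a j x‖ * ‖b j x‖) :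
    ‖∑ j, ∫ x, B j x ∂(μ j)‖ ^ 2
      ≤ (∑ j, ∫ x, ‖a j x‖ ^ 2 ∂(μ j)) * ∑ j, ∫ x, ‖b j x‖ ^ 2 ∂(μ j) :=
  (pow_le_pow_left₀ (norm_nonneg _) (norm_sum_le _ _) 2).trans <|
    Finset.sum_sq_le_sum_mul_sum_of_sq_le_mul _
      (fun _ _ => integral_nonneg fun _ => sq_nonneg _)
      (fun _ _ => integral_nonneg fun _ => sq_nonneg _)
      fun j _ => sq_norm_integral_le_of_norm_le_mul (ha j) (hb j) (hB j)

end CauchySchwarz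

section EuclideanMatrix

open WithLp RealInnerProductSpace
open scoped Matrix.Norms.L2Operator

variable {m n : Type*} [Fintype m] [Fintype n]

theorem norm_toLp_sq_eq_dotProduct (v : n → ℝ) : ‖toLp 2 v‖ ^ 2 = v ⬝ᵥ v := by
  rw [EuclideanSpace.real_norm_sq_eq]
  exact Finset.sum_congr rfl fun i _ => sq (v i)

theorem weightedEnergy_toLp (K : ℝ) (y : ℝ → n → ℝ) :
    weightedEnergy K (fun s => toLp 2 (y s)) = fun s => Real.exp (2 * K * s) * (y s ⬝ᵥ y s) := by
  ext s
  rw [weightedEnergy, norm_toLp_sq_eq_dotProduct]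

theorem norm_toLp_vec_sq (A : Matrix m n ℝ) : ‖toLp 2 A.vec‖ ^ 2 = ∑ i, ∑ j, A i j ^ 2 := by
  rw [EuclideanSpace.real_norm_sq_eq, Fintype.sum_prod_type, Finset.sum_comm]
  rfl

theorem norm_toLp_transpose_mulVec_le_vec (A : Matrix m n ℝ) (v : m → ℝ) :
    ‖toLp 2 (Aᵀ *ᵥ v)‖ ≤ ‖toLp 2 A.vec‖ * ‖toLp 2 v‖ := by
  refine le_of_sq_le_sq ?_ (by positivity)
  rw [mul_pow, norm_toLp_vec_sq, Finset.sum_comm, Finset.sum_mul]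
  simp only [EuclideanSpace.real_norm_sq_eq]
  exact Finset.sum_le_sum fun i _ => Finset.sum_mul_sq_le_sq_mul_sq _ (fun j => A j i) v

theorem norm_toLp_transpose_mulVec_le_l2_opNorm [DecidableEq n] (A : Matrix m n ℝ) (v : m → ℝ) :
    ‖toLp 2 (Aᵀ *ᵥ v)‖ ≤ ‖A‖ * ‖toLp 2 v‖ := by
  classical
  rw [← conjTranspose_eq_transpose_of_trivial, ← l2_opNorm_conjTranspose A]
  exact Aᴴ.l2_opNorm_mulVec (toLp 2 v)

theorem two_mul_inner_toLp_transpose_mulVec (A : Matrix n n ℝ) (v : n → ℝ) :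
    2 * ⟪toLp 2 v, toLp 2 (Aᵀ *ᵥ v)⟫ = ((A + Aᵀ) *ᵥ v) ⬝ᵥ v := by
  rw [EuclideanSpace.inner_toLp_toLp, star_trivial, add_mulVec, add_dotProduct, two_mul,
    mulVec_transpose, ← dotProduct_mulVec, dotProduct_comm v]

theorem toLp_integral {α : Type*} [MeasurableSpace α] (μ : Measure α) (g : α → n → ℝ) :
    toLp 2 (∫ x, g x ∂μ) = ∫ x, toLp 2 (g x) ∂μ :=
  ((PiLp.continuousLinearEquiv 2 ℝ fun _ : n => ℝ).symm.integral_comp_comm g).symm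

theorem toLp_intervalIntegral {a b : ℝ} (g : ℝ → n → ℝ) :
    toLp 2 (∫ s in a..b, g s) = ∫ s in a..b, toLp 2 (g s) := by
  simp only [intervalIntegral, toLp_sub, toLp_integral]

theorem opNorm_eq_l2_opNorm {p q : ℕ} (C : Matrix (Fin p) (Fin q) ℝ) : opNorm C = ‖C‖ := by
  have hsqrt {r : ℕ} (v : Fin r → ℝ) : √(v ⬝ᵥ v) = ‖toLp 2 v‖ := by
    rw [← norm_toLp_sq_eq_dotProduct, Real.sqrt_sq (norm_nonneg _)]
  simp only [opNorm, hsqrt]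
  rw [l2_opNorm_def, ← ContinuousLinearMap.sSup_unitClosedBall_eq_norm]
  congr 1
  ext r
  constructor
  · rintro ⟨v, hv, rfl⟩
    exact ⟨toLp 2 v, mem_closedBall_zero_iff.2 hv, rfl⟩
  · rintro ⟨v, hv, rfl⟩
    exact ⟨ofLp v, mem_closedBall_zero_iff.1 hv, rfl⟩

end EuclideanMatrix

section Backward

open WithLp RealInnerProductSpace
open scoped Matrix.Norms.L2Operator

variable {d m q ι E : Type*} [Fintype d] [Fintype m] [Fintype q] [Fintype ι]
  [MeasurableSpace E]

theorem norm_sq_toLp_sum_integral_transpose_mulVec_le {ρ : ι → Measure E}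
    {M : ι → E → Matrix q d ℝ} {k : ι → E → q → ℝ}
    (hM : ∀ j i i', Measurable fun e => M j e i i') (hk : ∀ j, Measurable (k j))
    (hMfin : ∀ j, Integrable (fun e => ∑ i, ∑ i', (M j e i i') ^ 2) (ρ j))
    (hkfin : ∀ j, Integrable (fun e => k j e ⬝ᵥ k j e) (ρ j)) :
    ‖toLp 2 (∑ j, ∫ e, (M j e)ᵀ *ᵥ k j e ∂(ρ j))‖ ^ 2
      ≤ (∑ j, ∫ e, ∑ i, ∑ i', (M j e i i') ^ 2 ∂(ρ j)) * ∑ j, ∫ e, k j e ⬝ᵥ k j e ∂(ρ j) := by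
  simp only [← norm_toLp_vec_sq, ← norm_toLp_sq_eq_dotProduct] at hMfin hkfin ⊢
  have hMmeas (j : ι) : Measurable fun e => toLp 2 (M j e).vec :=
    (measurable_toLp 2 _).comp (measurable_pi_lambda _ fun i => hM j i.2 i.1)
  have hkmeas (j : ι) : Measurable fun e => toLp 2 (k j e) := (measurable_toLp 2 _).comp (hk j)
  rw [toLp_sum]
  simp only [toLp_integral]
  exact sq_norm_sum_integral_le_of_norm_le_mul
    (fun j => (memLp_two_iff_integrable_sq_norm (hMmeas j).aestronglyMeasurable).2 (hMfin j))
    (fun j => (memLp_two_iff_integrable_sq_norm (hkmeas j).aestronglyMeasurable).2 (hkfin j))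
    fun j e => norm_toLp_transpose_mulVec_le_vec (M j e) (k j e)

variable [DecidableEq d]

/-- The right-hand side `-(2K I + A)ᵀ v - Cᵀ z - ∑ⱼ ∫ Mⱼᵀ kⱼ dρⱼ - f` of the backward equation, with
all coefficients frozen at one time. -/
noncomputable def backwardDrift (K : ℝ) (ρ : ι → Measure E) (A : Matrix d d ℝ)
    (C : Matrix m d ℝ) (M : ι → E → Matrix q d ℝ) (z : m → ℝ) (k : ι → E → q → ℝ)
    (f v : d → ℝ) : d → ℝ :=
  -((((2 * K) • (1 : Matrix d d ℝ) + A)ᵀ) *ᵥ v) - Cᵀ *ᵥ z - (∑ j, ∫ e, (M j e)ᵀ *ᵥ k j e ∂(ρ j)) - f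

/-- The driving density `‖C‖² |z|² + ‖M‖_ρ² ‖k‖_ρ² + |f|²` at one time, where `‖C‖` is the Euclidean
operator norm and `‖M‖_ρ²`, `‖k‖_ρ²` are the sums over `j` of the `ρⱼ`-integrals of the squared
Frobenius and Euclidean norms. -/
noncomputable def drivingDensity (ρ : ι → Measure E) (C : Matrix m d ℝ)
    (M : ι → E → Matrix q d ℝ) (z : m → ℝ) (k : ι → E → q → ℝ) (f : d → ℝ) : ℝ :=
  ‖C‖ ^ 2 * (z ⬝ᵥ z) +
    (∑ j, ∫ e, ∑ i, ∑ i', (M j e i i') ^ 2 ∂(ρ j)) * (∑ j, ∫ e, k j e ⬝ᵥ k j e ∂(ρ j)) + f ⬝ᵥ f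

theorem mul_norm_sq_sub_drivingDensity_le_inner_backwardDrift {K ε κ : ℝ}
    (hε : 0 < ε) {ρ : ι → Measure E} {A : Matrix d d ℝ} (C : Matrix m d ℝ)
    {M : ι → E → Matrix q d ℝ} (z : m → ℝ) {k : ι → E → q → ℝ} (f : d → ℝ) {v : d → ℝ}
    (hdiss : ((A + Aᵀ) *ᵥ v) ⬝ᵥ v ≤ -2 * κ * (v ⬝ᵥ v))
    (hM : ∀ j i i', Measurable fun e => M j e i i') (hk : ∀ j, Measurable (k j))
    (hMfin : ∀ j, Integrable (fun e => ∑ i, ∑ i', (M j e i i') ^ 2) (ρ j))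
    (hkfin : ∀ j, Integrable (fun e => k j e ⬝ᵥ k j e) (ρ j)) :
    (2 * κ - 2 * K - 3 * ε) * ‖toLp 2 v‖ ^ 2 - (1 / ε) * drivingDensity ρ C M z k f
      ≤ 2 * K * ‖toLp 2 v‖ ^ 2
        + 2 * ⟪toLp 2 v, toLp 2 (backwardDrift K ρ A C M z k f v)⟫ := by
  have hdrift : toLp 2 (backwardDrift K ρ A C M z k f v)
      = -((2 * K) • toLp 2 v + toLp 2 (Aᵀ *ᵥ v)) - toLp 2 (Cᵀ *ᵥ z)
        - toLp 2 (∑ j, ∫ e, (M j e)ᵀ *ᵥ k j e ∂(ρ j)) - toLp 2 f := by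
    rw [backwardDrift, transpose_add, transpose_smul, transpose_one, add_mulVec, smul_mulVec,
      one_mulVec]
    rfl
  have hC : ‖toLp 2 (Cᵀ *ᵥ z)‖ ^ 2 ≤ ‖C‖ ^ 2 * (z ⬝ᵥ z) := by
    rw [← norm_toLp_sq_eq_dotProduct, ← mul_pow]
    exact pow_le_pow_left₀ (norm_nonneg _) (norm_toLp_transpose_mulVec_le_l2_opNorm C z) 2
  have hMk := norm_sq_toLp_sum_integral_transpose_mulVec_le hM hk hMfin hkfin
  have hforcing : ‖toLp 2 (Cᵀ *ᵥ z)‖ ^ 2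
      + ‖toLp 2 (∑ j, ∫ e, (M j e)ᵀ *ᵥ k j e ∂(ρ j))‖ ^ 2 + ‖toLp 2 f‖ ^ 2
      ≤ drivingDensity ρ C M z k f :=
    add_le_add (add_le_add hC hMk) (norm_toLp_sq_eq_dotProduct f).le
  rw [hdrift]
  refine le_trans (by gcongr) (mul_norm_sq_sub_le_two_mul_inner_of_dissipative hε ?_ _ _ _)
  rwa [two_mul_inner_toLp_transpose_mulVec, norm_toLp_sq_eq_dotProduct]

theorem stmt_4_general {t K ε κ : ℝ} (hε : 0 < ε) (hεκ : 0 < 2 * κ - 2 * K - 3 * ε)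
    {ρ : ι → Measure E} {A : ℝ → Matrix d d ℝ} {C : ℝ → Matrix m d ℝ} {z : ℝ → m → ℝ}
    {f : ℝ → d → ℝ} {M : ι → ℝ → E → Matrix q d ℝ} {k : ι → ℝ → E → q → ℝ} {y : ℝ → d → ℝ}
    (hM : ∀ j i i', Measurable fun x : ℝ × E => M j x.1 x.2 i i')
    (hk : ∀ j, Measurable fun x : ℝ × E => k j x.1 x.2)
    (hdiss : ∀ᵐ s ∂(volume.restrict (Set.Ici t)),
      ∀ v : d → ℝ, ((A s + (A s)ᵀ) *ᵥ v) ⬝ᵥ v ≤ -2 * κ * (v ⬝ᵥ v))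
    (hMfin : ∀ j, ∀ᵐ s ∂(volume.restrict (Set.Ici t)),
      Integrable (fun e => ∑ i, ∑ i', (M j s e i i') ^ 2) (ρ j))
    (hkfin : ∀ j, ∀ᵐ s ∂(volume.restrict (Set.Ici t)),
      Integrable (fun e => k j s e ⬝ᵥ k j s e) (ρ j))
    (hint : ∀ T, t ≤ T → IntegrableOn
      (fun s => backwardDrift K ρ (A s) (C s) (M · s) (z s) (k · s) (f s) (y s)) (Set.Icc t T))
    (hy : ∀ s, t ≤ s → y s = y t + ∫ r in t..s,
      backwardDrift K ρ (A r) (C r) (M · r) (z r) (k · r) (f r) (y r))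
    (hylim : Filter.Tendsto (fun T => Real.exp (K * T) • y T) Filter.atTop (nhds 0))
    (hdrive : IntegrableOn (fun s => Real.exp (2 * K * s) *
      drivingDensity ρ (C s) (M · s) (z s) (k · s) (f s)) (Set.Ici t)) :
    IntegrableOn (fun s => Real.exp (2 * K * s) * (y s ⬝ᵥ y s)) (Set.Ici t) ∧
      Real.exp (2 * K * t) * (y t ⬝ᵥ y t)
        + (2 * κ - 2 * K - 3 * ε) * ∫ s in Set.Ici t, Real.exp (2 * K * s) * (y s ⬝ᵥ y s)
      ≤ (1 / ε) * ∫ s in Set.Ici t, Real.exp (2 * K * s) *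
          drivingDensity ρ (C s) (M · s) (z s) (k · s) (f s) := by
  have hG (T : ℝ) (hT : t ≤ T) : IntervalIntegrable (fun s => toLp 2
      (backwardDrift K ρ (A s) (C s) (M · s) (z s) (k · s) (f s) (y s))) volume t T :=
    (intervalIntegrable_iff_integrableOn_Icc_of_le hT).2
      ((PiLp.continuousLinearEquiv 2 ℝ fun _ : d => ℝ).symm.integrable_comp_iff.2 (hint T hT))
  have hpath (s : ℝ) (hs : t ≤ s) : toLp 2 (y s) = toLp 2 (y t) + ∫ r in t..s, toLp 2
      (backwardDrift K ρ (A r) (C r) (M · r) (z r) (k · r) (f r) (y r)) := by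
    rw [← toLp_intervalIntegral, ← toLp_add, ← hy s hs]
  have hlim : Filter.Tendsto (fun T => Real.exp (K * T) • toLp 2 (y T)) Filter.atTop (nhds 0) := by
    simpa only [Function.comp_def, toLp_smul, toLp_zero] using
      ((PiLp.continuous_toLp 2 fun _ : d => ℝ).tendsto 0).comp hylim
  have hforcing : IntegrableOn (fun s => Real.exp (2 * K * s) *
      ((1 / ε) * drivingDensity ρ (C s) (M · s) (z s) (k · s) (f s))) (Set.Ici t) := by
    simpa only [IntegrableOn, mul_left_comm _ (1 / ε)] using hdrive.const_mul (1 / ε)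
  have hdissipation : ∀ᵐ s ∂(volume.restrict (Set.Ici t)),
      (2 * κ - 2 * K - 3 * ε) * ‖toLp 2 (y s)‖ ^ 2
          - (1 / ε) * drivingDensity ρ (C s) (M · s) (z s) (k · s) (f s)
        ≤ 2 * K * ‖toLp 2 (y s)‖ ^ 2 + 2 * ⟪toLp 2 (y s), toLp 2
          (backwardDrift K ρ (A s) (C s) (M · s) (z s) (k · s) (f s) (y s))⟫ := by
    filter_upwards [hdiss, ae_all_iff.2 hMfin, ae_all_iff.2 hkfin] with s hA hMs hks
    exact mul_norm_sq_sub_drivingDensity_le_inner_backwardDrift hε (C s) (z s) (f s) (hA (y s))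
      (fun j i i' => (hM j i i').comp measurable_prodMk_left)
      (fun j => (hk j).comp measurable_prodMk_left) hMs hks
  simpa only [weightedEnergy_toLp, mul_left_comm _ (1 / ε),
    integral_const_mul] using integrableOn_weightedEnergy_and_add_mul_integral_le
      hεκ hG hpath hlim hforcing hdissipation

end Backward

/-- Deterministic infinite-horizon a priori estimate underlying Lemma 2.5
(equation (2.11)): under the finite-interval backward hypotheses on `[t,∞)`,
together with `2κ - 2K - 3ε > 0`, `e^{KT} y(T) → 0` and finiteness of the
weighted driving integral, `y` is weighted square-integrable and satisfies
the stated energy inequality. -/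
theorem stmt_4 (n p l : ℕ) (t K ε κ : ℝ) (ht : 0 ≤ t) (hε : 0 < ε)
    (hεκ : 0 < 2*κ - 2*K - 3*ε)
    (E : Type) [MeasurableSpace E] (ρ : Fin l → Measure E) (hρ : ∀ j, SigmaFinite (ρ j))
    (A : ℝ → Matrix (Fin n) (Fin n) ℝ) (C : ℝ → Matrix (Fin p) (Fin n) ℝ)
    (z : ℝ → (Fin p → ℝ)) (f : ℝ → (Fin n → ℝ))
    (M : Fin l → ℝ → E → Matrix (Fin n) (Fin n) ℝ)
    (k : Fin l → ℝ → E → (Fin n → ℝ))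
    (y : ℝ → (Fin n → ℝ))
    (hA : ∀ i j, Measurable fun s => A s i j)
    (hC : ∀ i j, Measurable fun s => C s i j)
    (hz : Measurable z) (hf : Measurable f)
    (hM : ∀ j i i', Measurable fun q : ℝ × E => M j q.1 q.2 i i')
    (hk : ∀ j, Measurable fun q : ℝ × E => k j q.1 q.2)
    (hdiss : ∀ᵐ s ∂(volume.restrict (Set.Ici t)),
      ∀ v : Fin n → ℝ, ((A s + (A s)ᵀ) *ᵥ v) ⬝ᵥ v ≤ -2 * κ * (v ⬝ᵥ v))
    (hMfin : ∀ j, ∀ᵐ s ∂(volume.restrict (Set.Ici t)),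
      Integrable (fun e => ∑ i, ∑ i', (M j s e i i')^2) (ρ j))
    (hkfin : ∀ j, ∀ᵐ s ∂(volume.restrict (Set.Ici t)),
      Integrable (fun e => (k j s e) ⬝ᵥ (k j s e)) (ρ j))
    (hint : ∀ T, t ≤ T → IntegrableOn (fun s =>
      -((((2*K) • (1 : Matrix (Fin n) (Fin n) ℝ) + A s)ᵀ) *ᵥ y s)
        - (C s)ᵀ *ᵥ z s - (∑ j, ∫ e, (M j s e)ᵀ *ᵥ k j s e ∂(ρ j)) - f s)
      (Set.Icc t T))
    (hy : ∀ s, t ≤ s → y s = y t + ∫ r in t..s,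
      (-((((2*K) • (1 : Matrix (Fin n) (Fin n) ℝ) + A r)ᵀ) *ᵥ y r)
        - (C r)ᵀ *ᵥ z r - (∑ j, ∫ e, (M j r e)ᵀ *ᵥ k j r e ∂(ρ j)) - f r))
    (hylim : Filter.Tendsto (fun T => Real.exp (K*T) • y T) Filter.atTop (nhds 0))
    (hdrive : IntegrableOn (fun s => Real.exp (2*K*s) *
          ((opNorm (C s))^2 * (z s ⬝ᵥ z s)
            + (∑ j, ∫ e, ∑ i, ∑ i', (M j s e i i')^2 ∂(ρ j))
              * (∑ j, ∫ e, (k j s e) ⬝ᵥ (k j s e) ∂(ρ j))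
            + (f s ⬝ᵥ f s))) (Set.Ici t)) :
    IntegrableOn (fun s => Real.exp (2*K*s) * (y s ⬝ᵥ y s)) (Set.Ici t) ∧
    Real.exp (2*K*t) * (y t ⬝ᵥ y t)
      + (2*κ - 2*K - 3*ε) * ∫ s in Set.Ici t, Real.exp (2*K*s) * (y s ⬝ᵥ y s)
    ≤ (1/ε) * ∫ s in Set.Ici t, Real.exp (2*K*s) *
          ((opNorm (C s))^2 * (z s ⬝ᵥ z s)
            + (∑ j, ∫ e, ∑ i, ∑ i', (M j s e i i')^2 ∂(ρ j))
              * (∑ j, ∫ e, (k j s e) ⬝ᵥ (k j s e) ∂(ρ j))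
            + (f s ⬝ᵥ f s)) := by
  simp only [opNorm_eq_l2_opNorm] at hdrive ⊢
  exact stmt_4_general hε hεκ hM hk hdiss hMfin hkfin hint hy hylim hdrive
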